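/- Let w be a nonempty word over a totally ordered alphabet Σ that is not an inverse Lyndon word, and let ICFL(w) = (m1, …, mk). Let i, j be integers with 1 < i < j ≤ k, let x be a nonempty suffix of m_{i−1} and y a nonempty suffix of m_{j−1}. Then LCP(x_w, y_w) = |lcp(x_w, y_w)| ≤ M(w). -/

import Mathlib

/-!
Write `x ≪ y` for "`x` and `y` differ at a first position, where `x` has the smaller letter"
(`StrongLt` below). The whole result rests on one property of the blocks of `ICFL(w)`
(`IsICFL.chain`): every nonempty suffix `z` of `m_t` satisfies `z ≪ m_{t+1}`; in particular
`m_t ≪ m_{t+1}`. It is proved by induction along the recursive definition of `ICFL`.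

* If `p` becomes a block of its own, it suffices to show `z ≪ pbar` for a nonempty suffix `z` of `p`
  (`suffix_strongLt_bre`). With `p = r a s` and `pbar = r b`, the only way to fail is
  `r = z r'`. As `pbar` is inverse Lyndon, `r' b ≺ r b`, whence `r' a ≪ r`; but the suffix `z r` of
  the inverse Lyndon word `p r = z r' a s r` gives `r ≺ r' a s r`, a contradiction.
* If `p` is merged with `m'₁`, then `p m'₁` is inverse Lyndon and begins with `m'₁ ≪ m'₂`, hence
  `p m'₁ ≪ m'₂`. A suffix `u` of `p m'₁` longer than `m'₁` and not `≪ m'₂` would be a prefix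
  of `m'₂`, so that `p m'₁ ≪ u`, against `u` being a suffix of an inverse Lyndon word.

Then in fact `y m_j` is never a prefix of `x_w` (`not_prefix_of_chain`): cancel the common part
block by block, until `m_j` is compared with a word beginning by a nonempty suffix of some
`m_l` with `l < j`, and `≪` forbids `m_j` being a prefix there. Hence
`LCP(x_w, y_w) < |y m_j| ≤ |m_{j-1} m_j| ≤ M(w)`.
-/

open List

section Defs

variable {α : Type*} [LinearOrder α]

/-- The lexicographic order `x ≺ y` on words over the ordered alphabet `α`. -/
def lexLt (x y : List α) : Prop := List.Lex (· < ·) x y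

/-- The inverse `<_in` of the letter order. -/
def invLt (a b : α) : Prop := b < a

/-- `x ≪ y` : `x ≺ y` and `x` is not a (proper) prefix of `y`. -/
def lexLtLt (x y : List α) : Prop := lexLt x y ∧ ¬ x <+: y

/-- `w` is a Lyndon word with respect to the letter order `r`:
nonempty, primitive, and `≺ᵣ`-smaller than each of its proper nonempty suffixes. -/
def IsLyndonWith (r : α → α → Prop) (w : List α) : Prop :=
  w ≠ [] ∧ (∀ (u : List α) (n : ℕ), w = (List.replicate n u).flatten → n = 1) ∧
  ∀ s : List α, s ≠ [] → s ≠ w → s <:+ w → List.Lex r w s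

/-- `L` is the Lyndon factorization of `w` with respect to the letter order `r`:
a nonempty sequence of Lyndon words, nonincreasing for `≺ᵣ`, whose product is `w`. -/
def IsCFLWith (r : α → α → Prop) (w : List α) (L : List (List α)) : Prop :=
  L ≠ [] ∧ L.flatten = w ∧ (∀ l ∈ L, IsLyndonWith r l) ∧
  List.Chain' (fun x y => ¬ List.Lex r x y) L

/-- an anti-prenecklace: a prefix of a power of an anti-Lyndon word. -/
def IsAntiPrenecklace (z : List α) : Prop :=
  ∃ (l : List α) (k : ℕ), IsLyndonWith invLt l ∧ z <+: (List.replicate k l).flatten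

/-- an inverse Lyndon word: each proper nonempty suffix is `≺`-smaller than `w`. -/
def IsInvLyndon (w : List α) : Prop :=
  w ≠ [] ∧ ∀ s : List α, s ≠ [] → s ≠ w → s <:+ w → lexLt s w

/-- `z` is a border of `w`: a proper prefix and a suffix of `w`. -/
def IsBorder (z w : List α) : Prop := z <+: w ∧ z ≠ w ∧ z <:+ w

/-- `(p, pbar) ∈ Pref_bre(w)`: `p` is an inverse Lyndon word which is a nonempty proper
prefix of `w = p v` and `pbar` is its bounded right extension. -/
def IsBRE (p pbar w : List α) : Prop :=
  IsInvLyndon p ∧ p ≠ [] ∧ p ≠ w ∧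
  (∃ v : List α, w = p ++ v ∧ pbar <+: v) ∧ pbar ≠ [] ∧
  IsInvLyndon pbar ∧
  (∀ z' : List α, z' ≠ [] → z' ≠ pbar → z' <+: pbar → IsInvLyndon (p ++ z')) ∧
  ¬ IsInvLyndon (p ++ pbar) ∧
  lexLt p pbar ∧ ¬ p <+: pbar

/-- The canonical inverse Lyndon factorization `ICFL(w) = M`. -/
inductive IsICFL : List α → List (List α) → Prop
  | base (w : List α) : IsInvLyndon w → IsICFL w [w]
  | ext (w p pbar v m1 : List α) (ms : List (List α)) :
      ¬ IsInvLyndon w → IsBRE p pbar w → w = p ++ v →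
      IsICFL v (m1 :: ms) → pbar <+: m1 → IsICFL w (p :: m1 :: ms)
  | grp (w p pbar v r : List α) (a b : α) (s m1 : List α) (ms : List (List α)) :
      ¬ IsInvLyndon w → IsBRE p pbar w → w = p ++ v →
      p = r ++ a :: s → pbar = r ++ [b] → a < b →
      IsICFL v (m1 :: ms) → m1 <+: r → IsICFL w ((p ++ m1) :: ms)

/-- the longest common prefix of two words. -/
def lcp : List α → List α → List α
  | a :: x, b :: y => if a = b then a :: lcp x y else []
  | _, _ => []

end Defs

/-! ### The strict order `≪` -/

section StrongLt

variable {α : Type*} [LinearOrder α]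

/-- The relation `x ≪ y`: there is a first position at which both words have a letter and these
letters differ, and there the letter of `x` is smaller. -/
def StrongLt : List α → List α → Prop
  | a :: x, b :: y => a < b ∨ (a = b ∧ StrongLt x y)
  | _, _ => False

theorem StrongLt.append {x y : List α} (h : StrongLt x y) (u v : List α) :
    StrongLt (x ++ u) (y ++ v) := by
  induction x generalizing y with
  | nil => simp [StrongLt] at h
  | cons a x ih =>
    cases y with
    | nil => simp [StrongLt] at h
    | cons b y =>
      simp only [StrongLt, List.cons_append] at h ⊢
      exact h.imp_right fun h => ⟨h.1, ih h.2⟩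

theorem StrongLt.trans {x y z : List α} (h : StrongLt x y) (h' : StrongLt y z) :
    StrongLt x z := by
  induction x generalizing y z with
  | nil => simp [StrongLt] at h
  | cons a x ih =>
    cases y with
    | nil => simp [StrongLt] at h
    | cons b y =>
      cases z with
      | nil => simp [StrongLt] at h'
      | cons c z =>
        simp only [StrongLt] at h h' ⊢
        rcases h with h | ⟨rfl, h⟩
        · rcases h' with h' | ⟨rfl, _⟩
          · exact Or.inl (h.trans h')
          · exact Or.inl h
        · rcases h' with h' | ⟨rfl, h'⟩
          · exact Or.inl h'
          · exact Or.inr ⟨rfl, ih h h'⟩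

theorem not_strongLt_self (x : List α) : ¬ StrongLt x x := by
  induction x with
  | nil => simp [StrongLt]
  | cons a x ih => simpa [StrongLt] using ih

theorem StrongLt.not_prefix {x y : List α} (h : StrongLt x y) : ¬ x <+: y := by
  rintro ⟨t, rfl⟩
  have := h.append t []
  simp only [List.append_nil] at this
  exact not_strongLt_self _ this

theorem StrongLt.not_prefix' {x y : List α} (h : StrongLt x y) : ¬ y <+: x := by
  rintro ⟨t, rfl⟩
  have := h.append [] t
  simp only [List.append_nil] at this
  exact not_strongLt_self _ this

theorem lexLt_cons_iff {a b : α} {x y : List α} :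
    lexLt (a :: x) (b :: y) ↔ a < b ∨ (a = b ∧ lexLt x y) :=
  List.cons_lex_cons_iff

theorem StrongLt.not_lexLt {x y : List α} (h : StrongLt x y) : ¬ lexLt y x := by
  induction x generalizing y with
  | nil => simp [StrongLt] at h
  | cons a x ih =>
    cases y with
    | nil => simp [StrongLt] at h
    | cons b y =>
      simp only [StrongLt] at h
      intro hl
      rcases lexLt_cons_iff.1 hl with hl' | ⟨rfl, hl'⟩
      · rcases h with h | ⟨rfl, _⟩
        · exact lt_asymm h hl'
        · exact lt_irrefl _ hl'
      · rcases h with h | ⟨_, h⟩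
        · exact lt_irrefl _ h
        · exact ih h hl'

theorem strongLt_or_prefix_of_lexLt {x y : List α} (h : lexLt x y) :
    StrongLt x y ∨ x <+: y := by
  unfold lexLt at h
  induction h with
  | nil => exact Or.inr List.nil_prefix
  | cons _ ih =>
    rcases ih with ih | ih
    · exact Or.inl (Or.inr ⟨rfl, ih⟩)
    · exact Or.inr ((List.prefix_cons_inj _).2 ih)
  | rel h => exact Or.inl (Or.inl h)

theorem strongLt_cases (x y : List α) :
    StrongLt x y ∨ StrongLt y x ∨ x <+: y ∨ y <+: x := by
  induction x generalizing y with
  | nil => simp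
  | cons a x ih =>
    cases y with
    | nil => simp
    | cons b y =>
      rcases lt_trichotomy a b with h | rfl | h
      · exact Or.inl (Or.inl h)
      · simpa [StrongLt, List.cons_prefix_cons] using ih y
      · exact Or.inr (Or.inl (Or.inl h))

theorem StrongLt.exists_split {x y : List α} (h : StrongLt x y) :
    ∃ r a s b t, x = r ++ a :: s ∧ y = r ++ b :: t ∧ a < b := by
  induction x generalizing y with
  | nil => simp [StrongLt] at h
  | cons a x ih =>
    cases y with
    | nil => simp [StrongLt] at h
    | cons b y =>
      rcases h with h | ⟨rfl, h⟩
      · exact ⟨[], a, x, b, y, rfl, rfl, h⟩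
      · obtain ⟨r, c, s, d, t, rfl, rfl, hcd⟩ := ih h
        exact ⟨a :: r, c, s, d, t, rfl, rfl, hcd⟩

theorem strongLt_split (r s t : List α) {a b : α} (h : a < b) :
    StrongLt (r ++ a :: s) (r ++ b :: t) := by
  induction r with
  | nil => exact Or.inl h
  | cons c r ih => exact Or.inr ⟨rfl, ih⟩

theorem lexLt_append_left_iff (z x y : List α) : lexLt (z ++ x) (z ++ y) ↔ lexLt x y := by
  induction z with
  | nil => simp
  | cons c z ih =>
    rw [← ih, List.cons_append, List.cons_append, lexLt_cons_iff]
    simp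

/-- Lowering the last letter of `r' b ≺ r b`, where `r'` is shorter than `r`, moves the first
difference inside `r`. -/
theorem strongLt_of_lexLt_concat {r' r : List α} {a b : α} (s : List α) (hab : a < b)
    (hlen : r'.length < r.length) (h : lexLt (r' ++ [b]) (r ++ [b])) :
    StrongLt (r' ++ a :: s) r := by
  induction r' generalizing r with
  | nil =>
    cases r with
    | nil => simp at hlen
    | cons c r =>
      rcases lexLt_cons_iff.1 h with h | ⟨rfl, h⟩
      · exact Or.inl (hab.trans h)
      · exact Or.inl hab
  | cons d r' ih =>
    cases r with
    | nil => simp at hlen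
    | cons c r =>
      rcases lexLt_cons_iff.1 h with h' | ⟨rfl, h'⟩
      · exact Or.inl h'
      · exact Or.inr ⟨rfl, ih (by simpa using hlen) h'⟩

end StrongLt

/-! ### Consecutive blocks of `ICFL` -/

section Blocks

variable {α : Type*} [LinearOrder α]

theorem IsInvLyndon.not_strongLt_suffix {w s : List α} (hw : IsInvLyndon w) (hs : s <:+ w) :
    ¬ StrongLt w s := by
  intro h
  by_cases hsw : s = w
  · subst hsw
    exact not_strongLt_self _ h
  · have hne : s ≠ [] := by
      rintro rfl
      cases w <;> simp [StrongLt] at h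
    exact h.not_lexLt (hw.2 s hne hsw hs)

/-- The relation linking consecutive blocks of `ICFL`: every nonempty suffix of `u` is `≪ v`. -/
def SuffixLt (u v : List α) : Prop := ∀ z : List α, z ≠ [] → z <:+ u → StrongLt z v

/-- A nonempty suffix `z` of `p` is `≪ pbar`. The only obstruction, a border `z` of `p` that is also
a prefix of `pbar`, is excluded because `pbar` and `p r` are inverse Lyndon, where `pbar = r b`. -/
theorem suffix_strongLt_bre {p pbar w : List α} (h : IsBRE p pbar w) : SuffixLt p pbar := by
  obtain ⟨hp, -, -, -, -, hpb, hext, -, hlt, hnp⟩ := h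
  have hS : StrongLt p pbar := (strongLt_or_prefix_of_lexLt hlt).resolve_right hnp
  intro z hz hzp
  by_cases hzeq : z = p
  · exact hzeq ▸ hS
  rcases strongLt_or_prefix_of_lexLt (hp.2 z hz hzeq hzp) with h | hpre
  · exact h.trans hS
  rcases strongLt_cases z pbar with h | h | h | h
  · exact h
  · obtain ⟨u, rfl⟩ := hpre
    have h' := h.append [] u
    rw [List.append_nil] at h'
    exact absurd (h'.trans hS) (not_strongLt_self _)
  · exfalso
    obtain ⟨r, a, s, b, t, rfl, rfl, hab⟩ := hS.exists_split
    -- If `t` were nonempty, `p r b` would be inverse Lyndon in spite of its suffix `r b ≫ p`.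
    have ht : t = [] := by
      by_contra ht
      have h1 : IsInvLyndon ((r ++ a :: s) ++ (r ++ [b])) :=
        hext _ (by simp) (by simpa using Ne.symm ht) ⟨t, by simp⟩
      refine h1.not_strongLt_suffix (List.suffix_append _ _) ?_
      have h2 := (strongLt_split r s [] hab).append (r ++ [b]) []
      simpa using h2
    subst ht
    have hzr : z <+: r := by
      rcases List.prefix_concat_iff.1 h with h | h
      · subst h
        exact absurd hpre hS.not_prefix'
      · exact h
    obtain ⟨r', rfl⟩ := hzr
    have hzl : 0 < z.length := List.length_pos_iff.2 hz
    have h1 : lexLt (r' ++ [b]) ((z ++ r') ++ [b]) :=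
      hpb.2 _ (by simp) (fun he => by
        have := congrArg List.length he
        simp only [List.length_append] at this
        omega)
        ⟨z, by simp⟩
    have h2 : StrongLt (r' ++ a :: s) (z ++ r') :=
      strongLt_of_lexLt_concat s hab (by simp; omega) h1
    have h3 : IsInvLyndon ((z ++ r' ++ a :: s) ++ (z ++ r')) :=
      hext _ (by simp [hz]) (by simp) ⟨[b], by simp⟩
    obtain ⟨q, hq⟩ := hzp
    have hql : 0 < q.length := by
      rcases q with _ | _
      · exact absurd hq hzeq
      · simp
    have h4 : lexLt (z ++ (z ++ r')) ((z ++ r' ++ a :: s) ++ (z ++ r')) := by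
      refine h3.2 _ (by simp [hz]) (fun he => ?_) ⟨q, by rw [← hq]; simp⟩
      have e1 := congrArg List.length he
      have e2 := congrArg List.length hq
      simp at e1 e2
      omega
    rw [show (z ++ r' ++ a :: s) ++ (z ++ r') = z ++ ((r' ++ a :: s) ++ (z ++ r')) by simp,
      lexLt_append_left_iff] at h4
    have h5 := h2.append (z ++ r') []
    rw [List.append_nil] at h5
    exact h5.not_lexLt h4
  · exact absurd (h.trans hpre) hS.not_prefix'

theorem SuffixLt.of_prefix {u v v' : List α} (h : SuffixLt u v) (hv : v <+: v') :
    SuffixLt u v' := by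
  obtain ⟨t, rfl⟩ := hv
  intro z hz hzu
  simpa using (h z hz hzu).append [] t

/-- Merging `p` into the block `m₁`: a longer inverse Lyndon word `q` that both begins and ends
with `m₁` keeps the relation of `m₁` to the next block. -/
theorem SuffixLt.extend {q m₁ m₂ : List α} (h : SuffixLt m₁ m₂) (hm : m₁ ≠ [])
    (hq : IsInvLyndon q) (hpre : m₁ <+: q) (hsuf : m₁ <:+ q) : SuffixLt q m₂ := by
  have hlt : StrongLt m₁ m₂ := h m₁ hm (List.suffix_refl _)
  have hqm : StrongLt q m₂ := by
    obtain ⟨t, rfl⟩ := hpre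
    simpa using hlt.append t []
  intro u hu huq
  rcases List.suffix_or_suffix_of_suffix huq hsuf with hum | hmu
  · exact h u hu hum
  by_cases hueq : u = q
  · exact hueq ▸ hqm
  rcases strongLt_or_prefix_of_lexLt (hq.2 u hu hueq huq) with h' | h'
  · exact h'.trans hqm
  -- Here `u` and `m₁` are both prefixes of `q`, and `u` is the longer one.
  · have hmu' : m₁ <+: u := List.prefix_of_prefix_length_le hpre h' hmu.length_le
    obtain ⟨t, rfl⟩ := hmu'
    simpa using hlt.append t []

/-- Blocks of `ICFL` are nonempty, and consecutive ones are related by `SuffixLt`. -/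
theorem IsICFL.chain {w : List α} {M : List (List α)} (h : IsICFL w M) :
    (∀ m ∈ M, m ≠ []) ∧ M.IsChain SuffixLt := by
  induction h with
  | base w hw => simpa using hw.1
  | ext w p pbar v m1 ms hw hb hv hI hpre ih =>
    refine ⟨?_, ?_⟩
    · intro m hm
      rcases List.mem_cons.1 hm with rfl | hm
      · exact hb.1.1
      · exact ih.1 m hm
    · exact List.isChain_cons_cons.2 ⟨(suffix_strongLt_bre hb).of_prefix hpre, ih.2⟩
  | grp w p pbar v r a b s m1 ms hw hb hv hp hpb hab hI hpre ih =>
    have hm1 : m1 ≠ [] := ih.1 m1 (by simp)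
    refine ⟨?_, ?_⟩
    · intro m hm
      rcases List.mem_cons.1 hm with rfl | hm
      · simp [hm1]
      · exact ih.1 m (by simp [hm])
    · have hq : IsInvLyndon (p ++ m1) := by
        refine hb.2.2.2.2.2.2.1 m1 hm1 ?_ ?_
        · rintro rfl
          have := hpre.length_le
          rw [hpb] at this
          simp at this
        · rw [hpb]
          exact hpre.trans (List.prefix_append _ _)
      have hmp : m1 <+: p ++ m1 := by
        rw [hp, List.append_assoc]
        exact hpre.trans (List.prefix_append _ _)
      cases ms with
      | nil => simp
      | cons m2 ms =>
        have := List.isChain_cons_cons.1 ih.2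
        exact List.isChain_cons_cons.2
          ⟨this.1.extend hm1 hq hmp (List.suffix_append _ _), this.2⟩

end Blocks

/-! ### Common prefixes of suffixes -/

section Final

variable {α : Type*} [LinearOrder α]

theorem lcp_prefix_left (x y : List α) : lcp x y <+: x := by
  induction x generalizing y with
  | nil => simp [lcp]
  | cons a x ih =>
    cases y with
    | nil => simp [lcp]
    | cons b y =>
      simp only [lcp]
      split_ifs
      · exact (List.prefix_cons_inj _).2 (ih y)
      · simp

theorem lcp_prefix_right (x y : List α) : lcp x y <+: y := by
  induction x generalizing y with
  | nil => simp [lcp]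
  | cons a x ih =>
    cases y with
    | nil => simp [lcp]
    | cons b y =>
      simp only [lcp]
      split_ifs with h
      · subst h
        exact (List.prefix_cons_inj _).2 (ih y)
      · simp

theorem flatten_drop_eq {β : Type*} (M : List (List β)) {i : ℕ} (hi : i < M.length) :
    (M.drop i).flatten = M[i]! ++ (M.drop (i + 1)).flatten := by
  rw [List.drop_eq_getElem_cons hi, List.flatten_cons, getElem!_pos M i hi]

theorem blocks_strongLt {M : List (List α)} (hne : ∀ t < M.length, M[t]! ≠ [])
    (hM : ∀ t, t + 1 < M.length → SuffixLt M[t]! M[t + 1]!) {i j : ℕ} (hij : i < j)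
    (hj : j < M.length) : StrongLt M[i]! M[j]! := by
  induction j, hij using Nat.le_induction with
  | base => exact hM i hj _ (hne i (by omega)) (List.suffix_refl _)
  | succ k hk ih =>
    exact (ih (by omega)).trans (hM k hj _ (hne k (by omega)) (List.suffix_refl _))

/-- The cancellation argument, for a suffix `x` of the block before `m_i` and a possibly
empty suffix `y` of the block before `m_j`. Allowing `i = j` with `y` shorter than `x` is what
lets the induction on `j - i` run to its end. -/
theorem not_prefix_of_chain {M : List (List α)} (hne : ∀ t < M.length, M[t]! ≠ [])
    (hM : ∀ t, t + 1 < M.length → SuffixLt M[t]! M[t + 1]!) {j : ℕ} (hj : j < M.length)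
    (n : ℕ) : ∀ (i : ℕ) (x y : List α), i + n = j → 0 < i → x ≠ [] → x <:+ M[i - 1]! →
      y <:+ M[j - 1]! → (n = 0 → y.length < x.length) →
      ¬ (y ++ M[j]!) <+: (x ++ (M.drop i).flatten) := by
  induction n with
  | zero =>
    intro i x y hin hi hx hxs hys hlen hpre
    obtain rfl : i = j := by omega
    have hyx : y <+: x :=
      List.prefix_of_prefix_length_le ((List.prefix_append _ _).trans hpre)
        (List.prefix_append _ _) (hlen rfl).le
    obtain ⟨z, rfl⟩ := hyx
    have hz : z ≠ [] := by
      rintro rfl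
      simp at hlen
    rw [List.append_assoc, List.prefix_append_right_inj] at hpre
    have h := hM (i - 1) (by omega) z hz ((List.suffix_append _ _).trans hxs)
    rw [show i - 1 + 1 = i by omega] at h
    have h' := h.append (M.drop i).flatten []
    rw [List.append_nil] at h'
    exact h'.not_prefix' hpre
  | succ n ih =>
    intro i x y hin hi hx hxs hys _ hpre
    have hij : StrongLt M[i]! M[j]! := blocks_strongLt hne hM (by omega) hj
    rcases Nat.lt_or_ge x.length y.length with hlt | hle
    · have hxy : x <+: y :=
        List.prefix_of_prefix_length_le (List.prefix_append _ _)
          ((List.prefix_append _ _).trans hpre) hlt.le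
      obtain ⟨z, rfl⟩ := hxy
      rw [List.append_assoc, List.prefix_append_right_inj, flatten_drop_eq M (by omega)] at hpre
      refine ih (i + 1) M[i]! z (by omega) (by omega) (hne i (by omega)) (by simp)
        ((List.suffix_append _ _).trans hys) ?_ hpre
      rintro rfl
      have h1 := hys.length_le
      rw [show j - 1 = i by omega, List.length_append] at h1
      have h2 := List.length_pos_iff.2 hx
      omega
    · have hyx : y <+: x :=
        List.prefix_of_prefix_length_le ((List.prefix_append _ _).trans hpre)
          (List.prefix_append _ _) hle
      obtain ⟨z, rfl⟩ := hyx
      rw [List.append_assoc, List.prefix_append_right_inj] at hpre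
      by_cases hz : z = []
      · subst hz
        rw [List.nil_append, flatten_drop_eq M (by omega)] at hpre
        have h' := hij.append (M.drop (i + 1)).flatten []
        rw [List.append_nil] at h'
        exact h'.not_prefix' hpre
      · have h := hM (i - 1) (by omega) z hz ((List.suffix_append _ _).trans hxs)
        rw [show i - 1 + 1 = i by omega] at h
        have h' := (h.trans hij).append (M.drop i).flatten []
        rw [List.append_nil] at h'
        exact h'.not_prefix' hpre

end Final

/-- Proposition `lcpdiversi`: with `ICFL(w) = (m₁, …, m_k)` and `i < j` (0-based
positions of `m_i`, `m_j`), if `x` is a nonempty suffix of `m_{i-1}` and `y` a nonempty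
suffix of `m_{j-1}`, then `LCP(x_w, y_w) ≤ M(w) = max_{t} |m_t m_{t+1}|`. -/
theorem stmt18 {α : Type*} [LinearOrder α] (w : List α) (hw : w ≠ [])
    (hwn : ¬ IsInvLyndon w)
    (M : List (List α)) (hM : IsICFL w M)
    (i j : ℕ) (hi0 : 0 < i) (hij : i < j) (hjk : j < M.length)
    (x y : List α) (hx : x ≠ []) (hy : y ≠ [])
    (hxs : x <:+ M[i-1]!) (hys : y <:+ M[j-1]!) :
    (lcp (x ++ (M.drop i).flatten) (y ++ (M.drop j).flatten)).length ≤
      (Finset.range (M.length - 1)).sup (fun t => (M[t]! ++ M[t+1]!).length) := by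
  obtain ⟨hne, hch⟩ := hM.chain
  have hne' : ∀ t < M.length, M[t]! ≠ [] := fun t ht => by
    rw [getElem!_pos M t ht]
    exact hne _ (List.getElem_mem ht)
  have hch' : ∀ t, t + 1 < M.length → SuffixLt M[t]! M[t + 1]! := fun t ht => by
    rw [getElem!_pos M t (by omega), getElem!_pos M (t + 1) ht]
    exact List.isChain_iff_getElem.1 hch t ht
  have hmax : (M[j - 1]! ++ M[j]!).length ≤
      (Finset.range (M.length - 1)).sup (fun t => (M[t]! ++ M[t+1]!).length) := by
    have h := Finset.le_sup (f := fun t => (M[t]! ++ M[t+1]!).length)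
      (Finset.mem_range.2 (show j - 1 < M.length - 1 by omega))
    simpa only [show j - 1 + 1 = j by omega] using h
  refine le_trans ?_ hmax
  by_contra! hlong
  have hy' := hys.length_le
  rw [List.length_append] at hlong
  have hpre : y ++ M[j]! <+: lcp (x ++ (M.drop i).flatten) (y ++ (M.drop j).flatten) := by
    refine List.prefix_of_prefix_length_le ?_ (lcp_prefix_right _ _) ?_
    · rw [flatten_drop_eq M hjk, ← List.append_assoc]
      exact List.prefix_append _ _
    · rw [List.length_append]
      omega
  exact not_prefix_of_chain hne' hch' hjk (j - i) i x y (by omega) hi0 hx hxs hys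
    (by omega) (hpre.trans (lcp_prefix_left _ _))
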